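/- The q-secant number satisfies E_{2n}(q) = \frac{1}{(1-q)^{2n}} \sum_{k=0}^n \left( \binom{2n}{n-k} - \binom{2n}{n-k-1} \right) \sum_{i=0}^{2k} (-1)^{i+k} q^{i(2k-i)+k}. -/

import Mathlib

open Finset Polynomial
open scoped Classical

noncomputable section
/-- The value of a step: `+1` for an up step, `-1` for a down step. -/
def stepVal (b : Bool) : ℤ := if b then 1 else -1

/-- Height of the path after its first `i` steps. -/
def pathHeight {m : ℕ} (s : Fin m → Bool) (i : ℕ) : ℤ :=
  ∑ j : Fin m, if (j : ℕ) < i then stepVal (s j) else 0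

/-- A Dyck path: all partial sums nonnegative, final height `0`. -/
def IsDyck {m : ℕ} (s : Fin m → Bool) : Prop :=
  (∀ i : Fin m, 0 ≤ pathHeight s ((i : ℕ) + 1)) ∧ pathHeight s m = 0
/-- The `q`-integer `[k]_q = 1 + q + ⋯ + q^(k-1)` as a polynomial in `ℤ[q]`. -/
def qNum (k : ℕ) : Polynomial ℤ := ∑ j ∈ Finset.range k, X ^ j

/-- The `q`-tangent polynomial `E_{2n+1}(q)`: sum over Dyck paths of length `2n`,
where every step (up or down) starting at height `h` contributes `[h+1]_q`. -/
def Etan (n : ℕ) : Polynomial ℤ :=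
  ∑ s ∈ Finset.univ.filter (fun s : Fin (2*n) → Bool => IsDyck s),
    ∏ i : Fin (2*n), qNum ((pathHeight s (i : ℕ)).toNat + 1)

/-- The `q`-secant polynomial `E_{2n}(q)`: sum over Dyck paths of length `2n`,
where an up step from height `h` contributes `[h+1]_q` and a down step from
height `h` contributes `[h]_q`. -/
def Esec (n : ℕ) : Polynomial ℤ :=
  ∑ s ∈ Finset.univ.filter (fun s : Fin (2*n) → Bool => IsDyck s),
    ∏ i : Fin (2*n),
      if s i then qNum ((pathHeight s (i : ℕ)).toNat + 1)
      else qNum ((pathHeight s (i : ℕ)).toNat)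
/-- Binomial coefficient `a choose b` with integer lower index, equal to `0`
when `b < 0`. -/
def chooseInt (a : ℕ) (b : ℤ) : ℤ := if 0 ≤ b then a.choose b.toNat else 0

/-- The inhomogeneous term of the recurrence for `chebMoment`: `2 (-q)^m` at `2m`, else `0`. -/
def chebSource : ℕ → Polynomial ℤ
  | 0 => 2
  | 1 => 0
  | k + 2 => -X * chebSource k

/-- `chebMoment k h` is the value on `U_k P_h` of the functional whose moments are
`(1 - q)^(2n) E_{2n}(q)`, where `U_k` is the (monic) Chebyshev polynomial of the second kind and
`P_h` the polynomials with `x P_h = (1 - q^(h+1)) P_{h+1} + (1 - q^h) P_{h-1}`. -/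
def chebMoment : ℕ → ℕ → Polynomial ℤ
  | 0, 0 => 1
  | 0, _ + 1 => 0
  | 1, 0 => 0
  | 1, 1 => 1 - X
  | 1, _ + 2 => 0
  | k + 2, 0 => X ^ (k + 2) * chebMoment k 0 + chebSource (k + 2)
  | k + 2, h + 1 =>
      (1 - X ^ (k + 2)) * chebMoment (k + 1) h + X ^ (k + 2) * chebMoment k (h + 1)

/-- Paths of length `m` from height `h` to `0`, a step between heights `i` and `i + 1`
having weight `1 - q^(i+1)`. -/
def pathSum : ℕ → ℕ → Polynomial ℤ
  | 0, h => if h = 0 then 1 else 0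
  | m + 1, h => (1 - X ^ (h + 1)) * pathSum m (h + 1) + (1 - X ^ h) * pathSum m (h - 1)

/-- The ballot number counting nonnegative paths of length `m` from `0` to `k`. -/
def ballot : ℕ → ℕ → ℤ
  | 0, 0 => 1
  | 0, _ + 1 => 0
  | m + 1, 0 => ballot m 1
  | m + 1, k + 1 => ballot m k + ballot m (k + 2)

theorem chebMoment_one_eq (h : ℕ) :
    chebMoment 1 h =
      (1 - X ^ (h + 1)) * chebMoment 0 (h + 1) + (1 - X ^ h) * chebMoment 0 (h - 1) := by
  match h with
  | 0 => simp [chebMoment]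
  | 1 => simp [chebMoment]
  | h + 2 => simp [chebMoment]

theorem chebMoment_add_two_add (k h : ℕ) :
    chebMoment (k + 2) h + chebMoment k h =
      (1 - X ^ (h + 1)) * chebMoment (k + 1) (h + 1)
        + (1 - X ^ h) * chebMoment (k + 1) (h - 1) := by
  induction k using Nat.strong_induction_on generalizing h with
  | _ k ih =>
  match k with
  | 0 =>
    match h with
    | 0 => simp [chebMoment, chebSource]; ring
    | 1 => simp [chebMoment]
    | 2 => simp [chebMoment]
    | h + 3 => simp [chebMoment]
  | 1 =>
    match h with
    | 0 => simp [chebMoment, chebSource]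
    | 1 => simp [chebMoment, chebSource]; ring
    | 2 => simp [chebMoment]
    | 3 => simp [chebMoment]
    | h + 4 => simp [chebMoment]
  | k + 2 =>
    have e1 := ih (k + 1) (by omega)
    have e2 := ih k (by omega)
    match h with
    | 0 =>
      have e2 := e2 0
      simp only [chebMoment, chebSource, Nat.zero_sub, zero_add] at e1 e2 ⊢
      linear_combination X ^ (k + 3) * e2
    | 1 =>
      have e1 := e1 0
      have e2 := e2 1
      simp only [chebMoment, chebSource, Nat.zero_sub, zero_add, Nat.sub_self,
        Nat.reduceAdd] at e1 e2 ⊢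
      linear_combination X ^ (k + 3) * e2 + X * (1 - X ^ (k + 3)) * e1
    | h + 2 =>
      have e1 := e1 (h + 1)
      have e2 := e2 (h + 2)
      simp only [chebMoment, Nat.add_sub_cancel, Nat.add_succ_sub_one] at e1 e2 ⊢
      linear_combination X ^ (k + 3) * e2 + X * (1 - X ^ (k + 3)) * e1

theorem ballot_eq_zero_of_lt {m k : ℕ} (hk : m < k) : ballot m k = 0 := by
  induction m generalizing k with
  | zero => obtain ⟨k, rfl⟩ := Nat.exists_eq_succ_of_ne_zero hk.ne'; rfl
  | succ m ih =>
    obtain ⟨k, rfl⟩ := Nat.exists_eq_succ_of_ne_zero (Nat.ne_zero_of_lt hk)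
    simp [ballot, ih (show m < k by omega), ih (show m < k + 2 by omega)]

theorem ballot_eq_zero_of_odd {m k : ℕ} (hk : Odd (m + k)) : ballot m k = 0 := by
  induction m generalizing k with
  | zero =>
    match k with
    | 0 => simp at hk
    | k + 1 => rfl
  | succ m ih =>
    match k with
    | 0 => exact ih (by simpa using hk)
    | k + 1 =>
      rw [ballot, ih (by grind), ih (by grind), add_zero]

theorem ballot_self (k : ℕ) : ballot k k = 1 := by
  induction k with
  | zero => rfl
  | succ k ih => rw [ballot, ih, ballot_eq_zero_of_lt (by omega), add_zero]

theorem ballot_eq_choose_sub {m j k : ℕ} (hm : m = 2 * (j + 1) + k) :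
    ballot m k = m.choose (j + 1) - m.choose j := by
  induction m generalizing j k with
  | zero => omega
  | succ m ih =>
    match k, j with
    | 0, 0 =>
      obtain rfl : m = 1 := by omega
      simp [ballot]
    | 0, j + 1 =>
      obtain rfl : m = 2 * (j + 1) + 1 := by omega
      rw [ballot, ih rfl, Nat.choose_succ_succ' (2 * (j + 1) + 1) (j + 1),
        Nat.choose_succ_succ' (2 * (j + 1) + 1) j, Nat.choose_symm_half (j + 1)]
      push_cast
      ring
    | k + 1, 0 =>
      obtain rfl : m = k + 2 := by omega
      rw [ballot, ballot_self, ih (j := 0) (by omega)]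
      simp
    | k + 1, j + 1 =>
      rw [ballot, ih (j := j + 1) (k := k) (by omega), ih (j := j) (k := k + 2) (by omega),
        Nat.choose_succ_succ _ (j + 1), Nat.choose_succ_succ _ j]
      push_cast
      ring

theorem ballot_eq_chooseInt_sub {n k : ℕ} (hk : k ≤ n) :
    ballot (2 * n) (2 * k) =
      chooseInt (2 * n) ((n : ℤ) - k) - chooseInt (2 * n) ((n : ℤ) - k - 1) := by
  obtain ⟨j, rfl⟩ := Nat.exists_eq_add_of_le hk
  match j with
  | 0 => simp [chooseInt, ballot_self]
  | j + 1 =>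
    have h1 : ((k + (j + 1) : ℕ) : ℤ) - k = (j + 1 : ℕ) := by push_cast; ring
    have h2 : ((j + 1 : ℕ) : ℤ) - 1 = (j : ℕ) := by push_cast; ring
    rw [ballot_eq_choose_sub (j := j) (by ring), h1, h2]
    simp only [chooseInt, Int.natCast_nonneg, if_true, Int.toNat_natCast]

theorem pathSum_eq_sum_ballot (m h : ℕ) :
    pathSum m h = ∑ k ∈ range (m + 1), (ballot m k : Polynomial ℤ) * chebMoment k h := by
  induction m generalizing h with
  | zero => cases h <;> simp [pathSum, ballot, chebMoment]
  | succ m ih =>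
    have step : ∀ k, (1 - X ^ (h + 1)) * chebMoment k (h + 1)
        + (1 - X ^ h) * chebMoment k (h - 1)
        = chebMoment (k + 1) h + if k = 0 then 0 else chebMoment (k - 1) h := by
      intro k
      match k with
      | 0 => simp [chebMoment_one_eq h]
      | k + 1 => simp [chebMoment_add_two_add k h]
    have lhs : pathSum (m + 1) h = ∑ k ∈ range (m + 1), (ballot m k : Polynomial ℤ) *
        (chebMoment (k + 1) h + if k = 0 then 0 else chebMoment (k - 1) h) := by
      simp only [pathSum, ih, mul_sum, ← sum_add_distrib, ← step]
      exact sum_congr rfl fun k _ => by ring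
    have shift : ∑ k ∈ range (m + 1), (ballot m (k + 2) : Polynomial ℤ) * chebMoment (k + 1) h
        + ballot m 1 * chebMoment 0 h
        = ∑ k ∈ range m, (ballot m (k + 1) : Polynomial ℤ) * chebMoment k h := by
      rw [← sum_range_succ' (fun k => (ballot m (k + 1) : Polynomial ℤ) * chebMoment k h),
        sum_range_succ, sum_range_succ, ballot_eq_zero_of_lt (show m < m + 1 by omega),
        ballot_eq_zero_of_lt (show m < m + 1 + 1 by omega)]
      simp
    rw [lhs, sum_range_succ' _ (m + 1)]
    simp only [ballot, mul_add, Int.cast_add, add_mul, sum_add_distrib]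
    rw [add_assoc, shift, sum_range_succ' (fun k => (ballot m k : Polynomial ℤ) *
      if k = 0 then 0 else chebMoment (k - 1) h)]
    simp

theorem chebSource_two_mul (k : ℕ) : chebSource (2 * k) = 2 * (-X) ^ k := by
  induction k with
  | zero => simp [chebSource]
  | succ k ih => rw [mul_add, mul_one, chebSource, ih]; ring

theorem chebMoment_two_mul_zero (k : ℕ) :
    chebMoment (2 * k) 0 =
      ∑ i ∈ range (2 * k + 1), (-1 : Polynomial ℤ) ^ (i + k) * X ^ (i * (2 * k - i) + k) := by
  induction k with
  | zero => simp [chebMoment]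
  | succ k ih =>
    have hs := chebSource_two_mul (k + 1)
    rw [mul_add, mul_one] at hs ⊢
    rw [chebMoment, ih, hs, mul_sum, sum_range_succ _ (2 * k + 2), sum_range_succ' _ (2 * k + 1)]
    have inner : ∀ i ∈ range (2 * k + 1),
        X ^ (2 * k + 2) * ((-1 : Polynomial ℤ) ^ (i + k) * X ^ (i * (2 * k - i) + k))
        = (-1) ^ (i + 1 + (k + 1)) * X ^ ((i + 1) * (2 * k + 2 - (i + 1)) + (k + 1)) := by
      intro i hi
      obtain ⟨d, hd⟩ := Nat.exists_eq_add_of_le (Nat.lt_succ_iff.mp (mem_range.mp hi))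
      rw [show 2 * k + 2 - (i + 1) = d + 1 by omega, show 2 * k - i = d by omega,
        show (i + 1) * (d + 1) + (k + 1) = (2 * k + 2) + (i * d + k) by rw [hd]; ring]
      ring
    rw [sum_congr rfl inner, neg_pow (X : Polynomial ℤ)]
    have h2 : ((-1 : Polynomial ℤ)) ^ (2 * k + 2 + (k + 1)) = (-1) ^ (k + 1) := by
      rw [pow_add, Even.neg_one_pow ⟨k + 1, by ring⟩, one_mul]
    simp only [Nat.sub_self, mul_zero, zero_mul, zero_add, h2]
    ring

theorem one_sub_X_mul_qNum (k : ℕ) : (1 - X) * qNum k = 1 - X ^ k :=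
  mul_neg_geom_sum X k

theorem pathHeight_cons_succ {m : ℕ} (b : Bool) (s : Fin m → Bool) (i : ℕ) :
    pathHeight (Fin.cons b s : Fin (m + 1) → Bool) (i + 1) = stepVal b + pathHeight s i := by
  simp [pathHeight, Fin.sum_univ_succ]

theorem pathHeight_zero {m : ℕ} (s : Fin m → Bool) : pathHeight s 0 = 0 := by
  simp [pathHeight]

/-- A path which, started at height `h`, stays nonnegative and ends at `0`. -/
def IsDyckFrom (h : ℤ) {m : ℕ} (s : Fin m → Bool) : Prop :=
  (∀ i : Fin m, 0 ≤ h + pathHeight s ((i : ℕ) + 1)) ∧ h + pathHeight s m = 0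

/-- The weight of a path started at height `h`. -/
def secWeight (h : ℤ) {m : ℕ} (s : Fin m → Bool) : Polynomial ℤ :=
  ∏ i : Fin m, if s i then qNum ((h + pathHeight s (i : ℕ)).toNat + 1)
    else qNum ((h + pathHeight s (i : ℕ)).toNat)

theorem isDyckFrom_cons (h : ℤ) {m : ℕ} (b : Bool) (s : Fin m → Bool) :
    IsDyckFrom h (Fin.cons b s : Fin (m + 1) → Bool) ↔
      0 ≤ h + stepVal b ∧ IsDyckFrom (h + stepVal b) s := by
  simp [IsDyckFrom, Fin.forall_fin_succ, pathHeight_cons_succ, pathHeight_zero, add_assoc,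
    and_assoc]

theorem secWeight_cons (h : ℤ) {m : ℕ} (b : Bool) (s : Fin m → Bool) :
    secWeight h (Fin.cons b s : Fin (m + 1) → Bool) =
      (if b then qNum (h.toNat + 1) else qNum h.toNat) * secWeight (h + stepVal b) s := by
  simp [secWeight, Fin.prod_univ_succ, pathHeight_cons_succ, pathHeight_zero, add_assoc]

theorem one_sub_X_pow_mul_sum_secWeight (m h : ℕ) :
    (1 - X) ^ m * ∑ s : Fin m → Bool, (if IsDyckFrom h s then secWeight h s else 0) =
      pathSum m h := by
  induction m generalizing h with
  | zero => simp [IsDyckFrom, secWeight, pathSum, pathHeight]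
  | succ m ih =>
    rw [← (Fin.consEquiv fun _ : Fin (m + 1) => Bool).sum_comp, Fintype.sum_prod_type,
      Fintype.sum_bool]
    simp only [Fin.consEquiv, Equiv.coe_fn_mk, isDyckFrom_cons, secWeight_cons, stepVal, if_true,
      Bool.false_eq_true, if_false, Int.toNat_natCast]
    rw [pathSum, ← ih (h + 1), ← ih (h - 1), ← one_sub_X_mul_qNum, ← one_sub_X_mul_qNum]
    have up : ∀ s : Fin m → Bool,
        (if 0 ≤ (h : ℤ) + 1 ∧ IsDyckFrom ((h : ℤ) + 1) s
          then qNum (h + 1) * secWeight ((h : ℤ) + 1) s else 0) =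
        qNum (h + 1) * if IsDyckFrom ((h + 1 : ℕ) : ℤ) s
          then secWeight ((h + 1 : ℕ) : ℤ) s else 0 := by
      intro s
      have : 0 ≤ (h : ℤ) + 1 := by positivity
      simp [this]
    have down : ∀ s : Fin m → Bool,
        (if 0 ≤ (h : ℤ) + -1 ∧ IsDyckFrom ((h : ℤ) + -1) s
          then qNum h * secWeight ((h : ℤ) + -1) s else 0) =
        qNum h * if IsDyckFrom ((h - 1 : ℕ) : ℤ) s
          then secWeight ((h - 1 : ℕ) : ℤ) s else 0 := by
      intro s
      match h with
      | 0 => simp [qNum]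
      | h + 1 => simp
    simp only [up, down, ← mul_sum]
    ring

theorem one_sub_X_pow_mul_Esec (n : ℕ) : (1 - X) ^ (2 * n) * Esec n = pathSum (2 * n) 0 := by
  have key : ∀ s : Fin (2 * n) → Bool, IsDyckFrom 0 s ↔ IsDyck s := by
    simp [IsDyck, IsDyckFrom]
  simp only [← one_sub_X_pow_mul_sum_secWeight, Esec, sum_filter, Nat.cast_zero, key, secWeight,
    zero_add]

theorem sum_range_two_mul_add_one_of_odd {M : Type*} [AddCommMonoid M] (f : ℕ → M)
    (hf : ∀ k, f (2 * k + 1) = 0) (n : ℕ) :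
    ∑ k ∈ range (2 * n + 1), f k = ∑ k ∈ range (n + 1), f (2 * k) := by
  induction n with
  | zero => simp
  | succ n ih =>
    rw [sum_range_succ _ (n + 1), ← ih, mul_add, mul_one, sum_range_succ, sum_range_succ, hf,
      add_zero]

theorem stmt12 (n : ℕ) :
    (1 - X : Polynomial ℤ) ^ (2*n) * Esec n =
      ∑ k ∈ Finset.range (n+1),
        ((chooseInt (2*n) ((n : ℤ) - k) - chooseInt (2*n) ((n : ℤ) - k - 1) : ℤ) :
            Polynomial ℤ) *
          ∑ i ∈ Finset.range (2*k+1), (-1 : Polynomial ℤ)^(i+k) * X ^ (i * (2*k-i) + k) := by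
  rw [one_sub_X_pow_mul_Esec, pathSum_eq_sum_ballot, sum_range_two_mul_add_one_of_odd]
  · refine sum_congr rfl fun k hk => ?_
    rw [chebMoment_two_mul_zero,
      ballot_eq_chooseInt_sub (Nat.lt_succ_iff.mp (mem_range.mp hk))]
  · intro k
    rw [ballot_eq_zero_of_odd ⟨n + k, by ring⟩, Int.cast_zero, zero_mul]
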